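/- Let k be a field of characteristic 2 and let σ be a k-algebra automorphism of k(x) of finite even order. Then σ has order exactly 2. -/

import Mathlib

namespace RatFunc

variable {K : Type*} [Field K]

/-- `1`, `X`, `X ^ 2` are linearly independent over the constants. -/
theorem coeffs_eq_zero_of_quadratic_eq_zero {u v w : K}
    (h : C u * X ^ 2 + C v * X + C w = (0 : RatFunc K)) : u = 0 ∧ v = 0 ∧ w = 0 := by
  have hp : (Polynomial.C u * Polynomial.X ^ 2 + Polynomial.C v * Polynomial.X +
      Polynomial.C w : Polynomial K) = 0 := by
    apply algebraMap_injective K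
    simpa using h
  refine ⟨?_, ?_, ?_⟩
  · simpa [Polynomial.coeff_X, Polynomial.coeff_C] using congrArg (Polynomial.coeff · 2) hp
  · simpa [Polynomial.coeff_X, Polynomial.coeff_C] using congrArg (Polynomial.coeff · 1) hp
  · simpa [Polynomial.coeff_X, Polynomial.coeff_C] using congrArg (Polynomial.coeff · 0) hp

theorem coeffs_eq_zero_of_linear_eq_zero {v w : K}
    (h : C v * X + C w = (0 : RatFunc K)) : v = 0 ∧ w = 0 :=
  (coeffs_eq_zero_of_quadratic_eq_zero (u := 0) (by simpa using h)).2

theorem algEquiv_C (σ : RatFunc K ≃ₐ[K] RatFunc K) (c : K) : σ (C c) = C c := by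
  simpa using σ.commutes c

theorem algEquiv_eq_one_of_apply_X {σ : RatFunc K ≃ₐ[K] RatFunc K} (h : σ X = X) : σ = 1 := by
  ext f
  have hpoly (p : Polynomial K) :
      σ (algebraMap (Polynomial K) (RatFunc K) p) = algebraMap _ _ p := by
    induction p using Polynomial.induction_on' with
    | add p q hp hq => simp [hp, hq]
    | monomial n a => simp [← Polynomial.C_mul_X_pow_eq_monomial, algEquiv_C, h]
  rw [← num_div_denom f, map_div₀, hpoly, hpoly, AlgEquiv.one_apply]

/-- Every `K`-automorphism of `K(X)` is given by a fractional linear transformation. -/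
theorem exists_fractional_linear (σ : RatFunc K ≃ₐ[K] RatFunc K) :
    ∃ a b c d : K, a * d - b * c ≠ 0 ∧ σ X * (C c * X + C d) = C a * X + C b := by
  have htop : IntermediateField.adjoin K {σ X} = ⊤ := by
    have h := IntermediateField.adjoin_map K {(X : RatFunc K)} σ.toAlgHom
    rw [adjoin_X, ← AlgHom.fieldRange_eq_map,
      AlgHom.fieldRange_eq_top.mpr σ.surjective] at h
    simpa using h.symm
  have hmax := finrank_eq_max_natDegree (σ X)
  rw [htop, IntermediateField.finrank_top] at hmax
  obtain ⟨a, b, hab⟩ := Polynomial.exists_eq_X_add_C_of_natDegree_le_one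
    (le_of_le_of_eq (le_max_left (σ X).num.natDegree (σ X).denom.natDegree) hmax.symm)
  obtain ⟨c, d, hcd⟩ := Polynomial.exists_eq_X_add_C_of_natDegree_le_one
    (le_of_le_of_eq (le_max_right (σ X).num.natDegree (σ X).denom.natDegree) hmax.symm)
  have hden : C c * X + C d ≠ (0 : RatFunc K) := by
    have h := algebraMap_ne_zero (σ X).denom_ne_zero
    rw [hcd] at h
    simpa using h
  have heq : σ X * (C c * X + C d) = C a * X + C b := by
    have h := num_div_denom (σ X)
    rw [div_eq_iff (algebraMap_ne_zero (σ X).denom_ne_zero)] at h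
    nth_rw 1 [hab] at h
    rw [hcd] at h
    simpa using h.symm
  refine ⟨a, b, c, d, fun hdet ↦ ?_, heq⟩
  have hdet' : C a * C d - C b * C c = (0 : RatFunc K) := by
    rw [← map_mul, ← map_mul, ← map_sub, hdet, map_zero]
  have hnc (e : K) : σ X ≠ C e := by
    intro h
    rw [← algEquiv_C σ e] at h
    have h0 := coeffs_eq_zero_of_linear_eq_zero (v := 1) (w := -e)
      (by rw [σ.injective h]; simp)
    exact one_ne_zero h0.1
  have hc : σ X * C c = C a :=
    mul_right_cancel₀ hden (by linear_combination C c * heq - hdet')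
  have hd : σ X * C d = C b :=
    mul_right_cancel₀ hden (by linear_combination C d * heq + X * hdet')
  by_cases hc0 : c = 0
  · have hd0 : d ≠ 0 := by
      rintro rfl
      simp [hc0] at hden
    exact hnc (b / d) (by rw [map_div₀, eq_div_iff (by simpa using hd0), hd])
  · exact hnc (a / c) (by rw [map_div₀, eq_div_iff (by simpa using hc0), hc])

/-- If `σ` acts through the matrix `M = !![a, b; c, d]`, then `σ ^ j` acts through an invertible
matrix of the form `p M + q`. -/
theorem exists_pow_fractional_linear {σ : RatFunc K ≃ₐ[K] RatFunc K} {a b c d : K}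
    (hdet : a * d - b * c ≠ 0) (hσ : σ X * (C c * X + C d) = C a * X + C b) (j : ℕ) :
    ∃ p q : K, (p * a + q) * (p * d + q) - p * b * (p * c) ≠ 0 ∧
      (σ ^ j) X * (C (p * c) * X + C (p * d + q)) = C (p * a + q) * X + C (p * b) := by
  induction j with
  | zero => exact ⟨0, 1, by simp, by simp⟩
  | succ j ih =>
    obtain ⟨p, q, hN, hj⟩ := ih
    refine ⟨p * (a + d) + q, -(p * (a * d - b * c)), ?_, ?_⟩
    · convert! mul_ne_zero hN hdet using 1
      ring
    · have h := congrArg σ hj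
      simp only [map_add, map_mul, algEquiv_C] at h
      rw [pow_succ', AlgEquiv.mul_apply]
      generalize σ ((σ ^ j) X) = z at h ⊢
      simp only [map_add, map_mul, map_neg, map_sub]
      linear_combination (C c * X + C d) * h +
        (C p * C a + C q - z * (C p * C c)) * hσ

/-- A fractional linear automorphism whose square is trivial is trivial or has trace zero. -/
theorem trace_eq_zero_of_sq_eq_one {τ : RatFunc K ≃ₐ[K] RatFunc K} {a b c d : K}
    (hdet : a * d - b * c ≠ 0) (hτ : τ X * (C c * X + C d) = C a * X + C b)
    (hsq : τ ^ 2 = 1) (hne : τ ≠ 1) : a + d = 0 := by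
  have hττ : τ (τ X) = X := by
    rw [← AlgEquiv.mul_apply, ← sq, hsq, AlgEquiv.one_apply]
  have h := congrArg τ hτ
  rw [map_mul, map_add, map_add, map_mul, map_mul, hττ] at h
  simp only [algEquiv_C] at h
  have hquad : C ((a + d) * c) * X ^ 2 + C ((a + d) * (d - a)) * X + C (-((a + d) * b)) =
      (0 : RatFunc K) := by
    simp only [map_add, map_mul, map_neg, map_sub]
    linear_combination (C c * X + C d) * h - (C c * X - C a) * hτ
  obtain ⟨hc, hda, hb⟩ := coeffs_eq_zero_of_quadratic_eq_zero hquad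
  by_contra ht
  have hc : c = 0 := by simpa [ht] using hc
  have hb : b = 0 := by simpa [ht] using hb
  have hda : d = a := by simpa [ht, sub_eq_zero] using hda
  subst hc hb hda
  have hd : C d ≠ (0 : RatFunc K) := by
    rw [map_ne_zero]
    rintro rfl
    simp at hdet
  exact hne (algEquiv_eq_one_of_apply_X (mul_right_cancel₀ hd (by simpa [mul_comm] using hτ)))

/-- A fractional linear automorphism of trace zero is an involution. -/
theorem sq_eq_one_of_trace_eq_zero {τ : RatFunc K ≃ₐ[K] RatFunc K} {a b c d : K}
    (hdet : a * d - b * c ≠ 0) (hτ : τ X * (C c * X + C d) = C a * X + C b)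
    (ht : a + d = 0) : τ ^ 2 = 1 := by
  obtain rfl : d = -a := by linear_combination ht
  have h := congrArg τ hτ
  rw [map_mul, map_add, map_add, map_mul, map_mul] at h
  simp only [algEquiv_C] at h
  have hdet' : C (a * -a - b * c) ≠ (0 : RatFunc K) := (map_ne_zero C).mpr hdet
  apply algEquiv_eq_one_of_apply_X
  rw [sq, AlgEquiv.mul_apply]
  apply mul_right_cancel₀ hdet'
  generalize τ (τ X) = z at h ⊢
  simp only [map_mul, map_neg, map_sub] at h hτ ⊢
  linear_combination (-(C c * X - C a)) * h + (z * C c - C a) * hτ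

end RatFunc

/-- If `k` has characteristic `2`, then a `k`-algebra automorphism of `k(x)` of finite
even order has order exactly `2`. -/
theorem stmt_7 (k : Type*) [Field k] [CharP k 2]
    (σ : RatFunc k ≃ₐ[k] RatFunc k) (hfin : IsOfFinOrder σ) (heven : Even (orderOf σ)) :
    orderOf σ = 2 := by
  obtain ⟨a, b, c, d, hdet, hσ⟩ := RatFunc.exists_fractional_linear σ
  obtain ⟨m, hm⟩ := heven
  have hpos := hfin.orderOf_pos
  have hsq : (σ ^ m) ^ 2 = 1 := by
    rw [← pow_mul, mul_two, ← hm, pow_orderOf_eq_one]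
  have hne : σ ^ m ≠ 1 := pow_ne_one_of_lt_orderOf (by omega) (by omega)
  obtain ⟨p, q, hN, hpow⟩ := RatFunc.exists_pow_fractional_linear hdet hσ m
  have htr := RatFunc.trace_eq_zero_of_sq_eq_one hN hpow hsq hne
  have hp : p ≠ 0 := by
    rintro rfl
    have hq : RatFunc.C q ≠ 0 := by
      rw [map_ne_zero]
      rintro rfl
      simp at hN
    exact hne (RatFunc.algEquiv_eq_one_of_apply_X
      (mul_right_cancel₀ hq (by simpa [mul_comm] using hpow)))
  have ht : a + d = 0 := by
    apply (mul_eq_zero.mp _).resolve_left hp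
    linear_combination htr - q * CharTwo.two_eq_zero (R := k)
  have hdvd := orderOf_dvd_of_pow_eq_one (RatFunc.sq_eq_one_of_trace_eq_zero hdet hσ ht)
  have := Nat.le_of_dvd two_pos hdvd
  omega
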